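/- Let N be a matroid and let {e, f} be a series pair of N. Then the contraction N/e belongs to \overline{BL} if and only if N belongs to \overline{BL}. -/

import Mathlib

open Set Matroid

universe u

namespace BLFormal

/-! ### Matroid preliminaries -/

/-- A circuit of a matroid: a minimal dependent set. -/
def Circuit {α : Type u} (M : Matroid α) (C : Set α) : Prop := Minimal M.Dep C

/-- Deletion of a set of elements from a matroid. -/
def del {α : Type u} (M : Matroid α) (D : Set α) : Matroid α := M ↾ (M.E \ D)

/-- Contraction of a set of elements of a matroid, defined by duality. -/
def con {α : Type u} (M : Matroid α) (C : Set α) : Matroid α := (del M✶ C)✶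

/-- `N` is a minor of `M` if it is obtained by a contraction followed by a deletion. -/
def IsMinor {α : Type u} (N M : Matroid α) : Prop := ∃ C D : Set α, N = del (con M C) D

/-- `N` is a proper (strict) minor of `M`. -/
def IsStrictMinor {α : Type u} (N M : Matroid α) : Prop := IsMinor N M ∧ N ≠ M

/-- The rank of a set `X` in the matroid `M`, as an extended natural number:
the supremum of the cardinalities of the independent subsets of `X`. -/
noncomputable def eRk {α : Type u} (M : Matroid α) (X : Set α) : ℕ∞ :=
  ⨆ I : {I : Set α // M.Indep I ∧ I ⊆ X}, (I : Set α).encard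

/-- The rank `r(M)` of a matroid, as an extended natural number. -/
noncomputable def eRank {α : Type u} (M : Matroid α) : ℕ∞ := eRk M M.E

/-- A loop of a matroid. -/
def MLoop {α : Type u} (M : Matroid α) (e : α) : Prop := M.Dep {e}

/-- A coloop of a matroid: a loop of the dual. -/
def MColoop {α : Type u} (M : Matroid α) (e : α) : Prop := MLoop M✶ e

/-- A `k`-separation of a matroid: a partition `(X, Y)` of the ground set with
`|X|, |Y| ≥ k` and `r(X) + r(Y) - r(M) ≤ k - 1`. -/
def IsKSep {α : Type u} (M : Matroid α) (k : ℕ) (X Y : Set α) : Prop :=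
  X ∪ Y = M.E ∧ Disjoint X Y ∧ (k : ℕ∞) ≤ X.encard ∧ (k : ℕ∞) ≤ Y.encard ∧
    eRk M X + eRk M Y ≤ eRank M + ((k - 1 : ℕ) : ℕ∞)

/-- A matroid is connected if it has no 1-separation. -/
def MConnected {α : Type u} (M : Matroid α) : Prop := ¬ ∃ X Y, IsKSep M 1 X Y

/-- A matroid is 3-connected if it is connected and has no 2-separation. -/
def ThreeConnected {α : Type u} (M : Matroid α) : Prop :=
  MConnected M ∧ ¬ ∃ X Y, IsKSep M 2 X Y

/-- Two elements of a matroid form a series pair if no circuit contains exactly one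
of them, and some circuit contains both. -/
def SeriesPair {α : Type u} (M : Matroid α) (e f : α) : Prop :=
  (∀ C, Circuit M C → (e ∈ C ↔ f ∈ C)) ∧ ∃ C, Circuit M C ∧ e ∈ C ∧ f ∈ C

/-- A series class: a maximal set in which every two elements form a series pair. -/
def IsSeriesClass {α : Type u} (M : Matroid α) (S : Set α) : Prop :=
  Maximal (fun T => T.Nonempty ∧ ∀ e ∈ T, ∀ f ∈ T, SeriesPair M e f) S

/-- `N` is a cosimplification `co(M)` of `M`: it is obtained from `M` by contracting
all coloops and, in each series class, all but one element. -/
def IsCosimplification {α : Type u} (M N : Matroid α) : Prop :=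
  ∃ D ⊆ M.E, N = con M D ∧ (∀ e, MColoop M e → e ∈ D) ∧
    ∀ S, IsSeriesClass M S → ∃ x ∈ S, S \ D = {x}

/-- `M` is isomorphic to the uniform matroid `U_{k, n}`: the ground set has `n` elements
and the circuits are precisely the `(k+1)`-element subsets of the ground set. -/
def IsUnif {α : Type u} (k n : ℕ) (M : Matroid α) : Prop :=
  M.E.encard = n ∧ ∀ C, Circuit M C ↔ C ⊆ M.E ∧ C.encard = k + 1

/-- `M` has a `U_{2,4}`-minor. -/
def HasU24Minor {α : Type u} (M : Matroid α) : Prop := ∃ N, IsMinor N M ∧ IsUnif 2 4 N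

/-- `M` is isomorphic to the direct sum `U_{2,4} ⊕ U_{0,1}` of `U_{2,4}` and a loop:
its ground set consists of a 4-element set `X` together with one further element `l`,
and its circuits are `{l}` and the 3-element subsets of `X`. -/
def IsU24PlusLoop {α : Type u} (M : Matroid α) : Prop :=
  ∃ (X : Set α) (l : α), l ∉ X ∧ M.E = insert l X ∧ X.encard = 4 ∧
    ∀ C, Circuit M C ↔ (C = {l} ∨ (C ⊆ X ∧ C.encard = 3))

/-- `M` is isomorphic to the Fano matroid `F₇`: the rank-3 matroid represented over
`GF(2)` by the seven nonzero vectors of `GF(2)³`. -/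
def IsFano {α : Type u} (M : Matroid α) : Prop :=
  ∃ v : α → (Fin 3 → ZMod 2),
    Set.BijOn v M.E {w | w ≠ 0} ∧
    ∀ I ⊆ M.E, (M.Indep I ↔ LinearIndependent (ZMod 2) (fun x : I => v x))

/-! ### Graphs (with loops and parallel edges allowed) -/

/-- A graph on vertex type `V`, with edge set `E` living in the ambient edge type `α`;
each edge is sent to the unordered pair of its end-vertices. -/
structure Graph (V : Type u) (α : Type u) where
  E : Set α
  inc : α → Sym2 V

namespace Graph

variable {V : Type u} {α : Type u}

/-- The vertices incident with an edge set `C`. -/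
def vertsOf (G : Graph V α) (C : Set α) : Set V := {v | ∃ e ∈ C, v ∈ G.inc e}

/-- The vertex set of a graph (we consider graphs without isolated vertices). -/
def verts (G : Graph V α) : Set V := G.vertsOf G.E

/-- Deletion of a set of edges from a graph. -/
def delete (G : Graph V α) (D : Set α) : Graph V α := ⟨G.E \ D, G.inc⟩

/-- The degree of a vertex `v` in the edge set `C`, with loops counting twice. -/
noncomputable def deg (G : Graph V α) (C : Set α) (v : V) : ℕ :=
  {e ∈ C | v ∈ G.inc e}.ncard + {e ∈ C | G.inc e = Sym2.diag v}.ncard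

/-- Two vertices are adjacent via an edge of `C`. -/
def AdjOn (G : Graph V α) (C : Set α) (u v : V) : Prop := ∃ e ∈ C, G.inc e = s(u, v)

/-- The subgraph with edge set `C` is connected. -/
def ConnectedOn (G : Graph V α) (C : Set α) : Prop :=
  ∀ u ∈ G.vertsOf C, ∀ v ∈ G.vertsOf C, Relation.ReflTransGen (G.AdjOn C) u v

/-- `C` is a cycle of `G` : the edge set of a connected 2-regular subgraph. -/
def IsCycle (G : Graph V α) (C : Set α) : Prop :=
  C ⊆ G.E ∧ C.Finite ∧ C.Nonempty ∧ (∀ v ∈ G.vertsOf C, G.deg C v = 2) ∧ G.ConnectedOn C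

/-- A graph is 2-edge-connected if each of its edges lies in a cycle. -/
def TwoEdgeConnected (G : Graph V α) : Prop := ∀ e ∈ G.E, ∃ C, G.IsCycle C ∧ e ∈ C

/-- A graph is connected if it has at least one vertex and any two of its
vertices are joined by a path. -/
def Connected (G : Graph V α) : Prop := G.verts.Nonempty ∧ G.ConnectedOn G.E

/-- Delete a vertex from a graph (removing all edges incident with it). -/
def delVert (G : Graph V α) (v : V) : Graph V α := ⟨{e ∈ G.E | v ∉ G.inc e}, G.inc⟩

/-- A graph is 2-connected if it is connected and stays connected after the
deletion of any vertex. -/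
def TwoConnected (G : Graph V α) : Prop :=
  G.Connected ∧ ∀ v ∈ G.verts, (G.delVert v).Connected

/-- `X` contains at least two (distinct) cycles of `G`. -/
def HasTwoCycles (G : Graph V α) (X : Set α) : Prop :=
  ∃ C₁ C₂, G.IsCycle C₁ ∧ G.IsCycle C₂ ∧ C₁ ≠ C₂ ∧ C₁ ⊆ X ∧ C₂ ⊆ X

/-- The circuits of the bicircular lift matroid of `G`: edge sets containing at
least two cycles and minimal with this property. -/
def LiftCircuit (G : Graph V α) (X : Set α) : Prop :=
  Minimal (fun Y => Y ⊆ G.E ∧ G.HasTwoCycles Y) X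

/-- Two edges of a graph form a series pair if no cycle contains exactly one of
them, and some cycle contains both. -/
def SeriesPair (G : Graph V α) (e f : α) : Prop :=
  (∀ C, G.IsCycle C → (e ∈ C ↔ f ∈ C)) ∧ ∃ C, G.IsCycle C ∧ e ∈ C ∧ f ∈ C

end Graph

/-- `N` is the bicircular lift matroid `L(G)` of `G` : its ground set is `E(G)`
and its circuits are the lift circuits of `G`. -/
def IsLiftRep {V α : Type u} (G : Graph V α) (N : Matroid α) : Prop :=
  N.E = G.E ∧ ∀ C, Circuit N C ↔ G.LiftCircuit C

/-- `N` is the cycle matroid `M(G)` of `G` : its ground set is `E(G)` and its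
circuits are the cycles of `G`. -/
def IsGraphicRep {V α : Type u} (G : Graph V α) (N : Matroid α) : Prop :=
  N.E = G.E ∧ ∀ C, Circuit N C ↔ G.IsCycle C

/-- A matroid is bicircular lift if it is (isomorphic to) `L(G)` for some graph `G`. -/
def IsBicircularLift {α : Type u} (N : Matroid α) : Prop :=
  ∃ (V : Type u) (G : Graph V α), IsLiftRep G N

/-- A matroid is graphic if it is (isomorphic to) the cycle matroid of some graph. -/
def IsGraphic {α : Type u} (N : Matroid α) : Prop :=
  ∃ (V : Type u) (G : Graph V α), IsGraphicRep G N

/-- The class `BL-bar` of matroids that are graphic or bicircular lift. -/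
def InBL {α : Type u} (N : Matroid α) : Prop := IsGraphic N ∨ IsBicircularLift N

/-- `M` is an excluded minor for the class `BL-bar`. -/
def ExcludedMinorBL {α : Type u} (M : Matroid α) : Prop :=
  ¬ InBL M ∧ ∀ N, IsStrictMinor N M → InBL N

/-! ### Special graphs and subdivisions -/

/-- `G` is (a copy of) the complete graph `K₄`. -/
def IsK4 {V α : Type u} (G : Graph V α) : Prop :=
  ∃ v : Fin 4 → V, Function.Injective v ∧
    ∃ ed : {p : Sym2 (Fin 4) // ¬ p.IsDiag} → α, Function.Injective ed ∧
      G.E = Set.range ed ∧ ∀ p, G.inc (ed p) = Sym2.map v p.1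

/-- `G` is (a copy of) the complete graph `K₅`. -/
def IsK5 {V α : Type u} (G : Graph V α) : Prop :=
  ∃ v : Fin 5 → V, Function.Injective v ∧
    ∃ ed : {p : Sym2 (Fin 5) // ¬ p.IsDiag} → α, Function.Injective ed ∧
      G.E = Set.range ed ∧ ∀ p, G.inc (ed p) = Sym2.map v p.1

/-- `G` is (a copy of) the complete bipartite graph `K₃,₃`. -/
def IsK33 {V α : Type u} (G : Graph V α) : Prop :=
  ∃ a b : Fin 3 → V, Function.Injective a ∧ Function.Injective b ∧
    Set.range a ∩ Set.range b = ∅ ∧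
    ∃ ed : Fin 3 × Fin 3 → α, Function.Injective ed ∧
      G.E = Set.range ed ∧ ∀ p, G.inc (ed p) = s(a p.1, b p.2)

/-- `G` is (a copy of) the graph `K₂ⁿ` with two vertices joined by `n` parallel edges. -/
def IsK2n {V α : Type u} (n : ℕ) (G : Graph V α) : Prop :=
  ∃ u v : V, u ≠ v ∧ ∃ ed : Fin n → α, Function.Injective ed ∧
    G.E = Set.range ed ∧ ∀ i, G.inc (ed i) = s(u, v)

/-- `H` is obtained from `G` by subdividing a single edge. -/
def ElemSub {V α : Type u} (G H : Graph V α) : Prop :=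
  ∃ e ∈ G.E, ∃ (f g : α) (u v w : V),
    G.inc e = s(u, v) ∧ w ∉ G.verts ∧ f ≠ g ∧
    f ∉ G.E \ {e} ∧ g ∉ G.E \ {e} ∧
    H.E = (G.E \ {e}) ∪ {f, g} ∧
    H.inc f = s(u, w) ∧ H.inc g = s(w, v) ∧
    ∀ x ∈ G.E \ {e}, H.inc x = G.inc x

/-- `H` is a subdivision of `G` : it is obtained from `G` by repeatedly
subdividing edges. -/
def IsSubdivision {V α : Type u} (G H : Graph V α) : Prop :=
  Relation.ReflTransGen ElemSub G H

/-! ### 2-sums and simplification -/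

/-- `N` is the 2-sum `N₁ ⊕₂ᵉ N₂` of `N₁` and `N₂` along `e`. -/
def Is2Sum {α : Type u} (N N₁ N₂ : Matroid α) (e : α) : Prop :=
  N₁.E ∩ N₂.E = {e} ∧
  ¬ MLoop N₁ e ∧ ¬ MColoop N₁ e ∧ ¬ MLoop N₂ e ∧ ¬ MColoop N₂ e ∧
  N.E = (N₁.E ∪ N₂.E) \ {e} ∧
  ∀ C, Circuit N C ↔
    ((Circuit N₁ C ∧ e ∉ C) ∨ (Circuit N₂ C ∧ e ∉ C) ∨
      ∃ C₁ C₂, Circuit N₁ C₁ ∧ Circuit N₂ C₂ ∧ e ∈ C₁ ∧ e ∈ C₂ ∧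
        C = (C₁ \ {e}) ∪ (C₂ \ {e}))

/-- `H` is a simplification `si(G)` of `G` : it is obtained from `G` by deleting all
loops and all but one edge of each parallel class. -/
def IsSimplification {V α : Type u} (G H : Graph V α) : Prop :=
  H.inc = G.inc ∧ H.E ⊆ G.E ∧ (∀ e ∈ H.E, ¬ (G.inc e).IsDiag) ∧
    ∀ e ∈ G.E, ¬ (G.inc e).IsDiag → ∃! f, f ∈ H.E ∧ G.inc f = G.inc e

/-- `H` is 2-connected, or is obtained from a 2-connected graph and a single edge `K₂`
by identifying one end-vertex of the edge with a vertex of the 2-connected graph. -/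
def TwoConnOrPendant {V α : Type u} (H : Graph V α) : Prop :=
  H.TwoConnected ∨
    ∃ (e : α) (u w : V), e ∈ H.E ∧ H.inc e = s(u, w) ∧ u ≠ w ∧
      (H.delete {e}).TwoConnected ∧ u ∈ (H.delete {e}).verts ∧ w ∉ (H.delete {e}).verts

/-!
Over `𝔽₂`, the cycles of a graph are the minimal nonempty edge sets whose boundary vectors add up to
zero, and a set of edges contains one cycle (two cycles) if and only if the nullity of its boundary
vectors is at least one (at least two). So `M(G)` and `L(G)` are treated alike: `X` is dependent
when its nullity is at least `k`, with `k = 1` or `k = 2`.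

Contracting an edge with distinct ends is dividing out its boundary vector `w e`, and this turns the
nullity of `X ∪ {e}` into that of `X`. Contracting a loop `e` of `G` in `L(G)` lowers `k` by one:
`L(G) / e = M(G \ e)`. Conversely, if `N / e` comes from `G`, subdivide the edge `f` of `G` by `e`.
Every relation between the boundary vectors of the new graph has equal coefficients at `e` and `f`,
and no circuit of `N` separates `e` from `f`, so it is enough to compare dependence in `N` with
nullity for the sets containing `e`, and these are governed by `N / e`.
-/

/-! ### Nullity of a family of vectors -/

section Nullity

/-- The space of linear relations among the vectors `w x` that involve only indices `x ∈ X`; a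
relation is a finitely supported coefficient function, so that no finiteness of `X` is needed. -/
noncomputable def relations (K : Type*) {α U : Type*} [DivisionRing K] [AddCommGroup U]
    [Module K U] (w : α → U) (X : Set α) : Submodule K (α →₀ K) :=
  LinearMap.ker (Finsupp.linearCombination K w) ⊓ Finsupp.supported K K X

/-- The nullity of the vectors `w x` with `x ∈ X`: the dimension of their space of linear relations,
with all infinite dimensions identified. It replaces `|X| - rank X`, which makes no sense for
infinite `X`. -/
noncomputable def nullity (K : Type*) {α U : Type*} [DivisionRing K] [AddCommGroup U] [Module K U]
    (w : α → U) (X : Set α) : ℕ∞ :=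
  (Module.rank K (relations K w X)).toENat

variable {K α U U' : Type*} [DivisionRing K] [AddCommGroup U] [Module K U]
  [AddCommGroup U'] [Module K U'] {w : α → U} {X : Set α} {e f : α}

lemma mem_relations {c : α →₀ K} :
    c ∈ relations K w X ↔ Finsupp.linearCombination K w c = 0 ∧ ↑c.support ⊆ X := by
  rw [relations, Submodule.mem_inf, LinearMap.mem_ker, Finsupp.mem_supported]

lemma rank_supported_singleton : Module.rank K (Finsupp.supported K K {e}) = 1 := by
  rw [(Finsupp.supportedEquivFinsupp {e}).rank_eq, rank_finsupp_self, Cardinal.mk_singleton,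
    Cardinal.lift_one]

lemma mem_supported_singleton_iff {c : α →₀ K} :
    c ∈ Finsupp.supported K K {e} ↔ ∃ a, c = Finsupp.single e a := by
  rw [Finsupp.mem_supported, ← Finset.coe_singleton, Finset.coe_subset,
    Finsupp.support_subset_singleton']

lemma toENat_rank_sup_supported_singleton {S : Submodule K (α →₀ K)}
    (hS : Disjoint S (Finsupp.supported K K {e})) :
    (Module.rank K ↥(S ⊔ Finsupp.supported K K {e})).toENat = (Module.rank K S).toENat + 1 := by
  have hrank := Submodule.rank_sup_add_rank_inf_eq S (Finsupp.supported K K {e})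
  rw [hS.eq_bot, rank_bot, add_zero, rank_supported_singleton] at hrank
  rw [hrank, map_add, map_one]

lemma nullity_insert_of_eq_zero (hw : w e = 0) (he : e ∉ X) :
    nullity K w (insert e X) = nullity K w X + 1 := by
  have hker : Finsupp.supported K K {e} ≤ LinearMap.ker (Finsupp.linearCombination K w) := by
    intro c hc
    obtain ⟨a, rfl⟩ := mem_supported_singleton_iff.1 hc
    simp [hw]
  have hsup : relations K w (insert e X) = relations K w X ⊔ Finsupp.supported K K {e} := by
    rw [relations, relations, Set.insert_eq, Set.union_comm, Finsupp.supported_union,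
      inf_sup_assoc_of_le _ hker]
  have hdisj : Disjoint (relations K w X) (Finsupp.supported K K {e}) :=
    (Finsupp.disjoint_supported_supported (Set.disjoint_singleton_right.2 he)).mono_left
      inf_le_right
  rw [nullity, hsup, toENat_rank_sup_supported_singleton hdisj, nullity]

lemma relations_comp_of_ker_eq_span (φ : U →ₗ[K] U') (hφ : LinearMap.ker φ = K ∙ w e)
    (he : e ∈ X) : relations K (φ ∘ w) X = relations K w X ⊔ Finsupp.supported K K {e} := by
  have hφe : φ (w e) = 0 := by
    rw [← LinearMap.mem_ker, hφ]
    exact Submodule.mem_span_singleton_self _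
  apply le_antisymm
  · intro c hc
    rw [mem_relations, ← Finsupp.apply_linearCombination, ← LinearMap.mem_ker, hφ,
      Submodule.mem_span_singleton] at hc
    obtain ⟨⟨a, ha⟩, hcX⟩ := hc
    refine Submodule.mem_sup.2 ⟨c - Finsupp.single e a, ⟨?_, ?_⟩, Finsupp.single e a,
      Finsupp.single_mem_supported K a rfl, sub_add_cancel _ _⟩
    · simp [ha]
    · exact sub_mem hcX (Finsupp.single_mem_supported K a he)
  · refine sup_le (fun c hc => ?_) (fun c hc => ?_)
    · rw [mem_relations] at hc ⊢
      rw [← Finsupp.apply_linearCombination, hc.1, map_zero]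
      exact ⟨rfl, hc.2⟩
    · obtain ⟨a, rfl⟩ := mem_supported_singleton_iff.1 hc
      exact ⟨by simp [hφe], Finsupp.single_mem_supported K a he⟩

lemma nullity_comp_of_ker_eq_span (φ : U →ₗ[K] U') (hφ : LinearMap.ker φ = K ∙ w e)
    (hw : w e ≠ 0) (he : e ∈ X) : nullity K (φ ∘ w) X = nullity K w X + 1 := by
  have hdisj : Disjoint (relations K w X) (Finsupp.supported K K {e}) := by
    rw [Submodule.disjoint_def]
    intro c hc hce
    obtain ⟨a, rfl⟩ := mem_supported_singleton_iff.1 hce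
    have ha := (mem_relations.1 hc).1
    rw [Finsupp.linearCombination_single, smul_eq_zero_iff_left hw] at ha
    rw [ha, Finsupp.single_zero]
  rw [nullity, relations_comp_of_ker_eq_span φ hφ he, toENat_rank_sup_supported_singleton hdisj,
    nullity]

lemma nullity_comp_eq_nullity_insert (φ : U →ₗ[K] U') (hφ : LinearMap.ker φ = K ∙ w e)
    (hw : w e ≠ 0) (he : e ∉ X) : nullity K (φ ∘ w) X = nullity K w (insert e X) := by
  have hφe : (φ ∘ w) e = 0 := by
    rw [Function.comp_apply, ← LinearMap.mem_ker, hφ]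
    exact Submodule.mem_span_singleton_self _
  rw [← (ENat.add_left_injective_of_ne_top ENat.one_ne_top).eq_iff]
  exact (nullity_insert_of_eq_zero hφe he).symm.trans
    (nullity_comp_of_ker_eq_span φ hφ hw (Set.mem_insert e X))

lemma nullity_congr {w' : α → U} (h : EqOn w w' X) : nullity K w X = nullity K w' X := by
  suffices relations K w X = relations K w' X by rw [nullity, nullity, this]
  ext c
  simp only [mem_relations, Finsupp.linearCombination_apply, Finsupp.sum]
  refine and_congr_left fun hc => ?_
  rw [Finset.sum_congr rfl fun x hx => by rw [h (hc hx)]]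

lemma nullity_sdiff_singleton (h : ∀ c, Finsupp.linearCombination K w c = 0 → c e = c f)
    (he : e ∉ X) : nullity K w (X \ {f}) = nullity K w X := by
  suffices relations K w (X \ {f}) = relations K w X by rw [nullity, nullity, this]
  ext c
  simp only [mem_relations, Set.subset_sdiff, Set.disjoint_singleton_right, Finset.mem_coe,
    Finsupp.mem_support_iff, ne_eq, not_not]
  refine and_congr_right fun hc => and_iff_left_of_imp fun hcX => ?_
  rw [← h c hc]
  exact Finsupp.notMem_support_iff.1 fun hce => he (hcX hce)

end Nullity

lemma card_lt_card_of_linearIndepOn {K α U U' : Type*} [DivisionRing K] [AddCommGroup U]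
    [Module K U] [AddCommGroup U'] [Module K U'] {w : α → U} {A : Finset α} {T : Finset U} {t : U}
    (φ : U →ₗ[K] U') (hw : LinearIndepOn K w A) (hwT : ∀ x ∈ A, w x ∈ Submodule.span K (T : Set U))
    (hφw : ∀ x ∈ A, φ (w x) = 0) (ht : t ∈ T) (hφt : φ t ≠ 0) : A.card < T.card := by
  have hle : Submodule.span K (range fun x : (A : Set α) => w x) ≤ Submodule.span K T :=
    Submodule.span_le.2 (range_subset_iff.2 fun x => hwT x x.2)
  have hker : Submodule.span K (range fun x : (A : Set α) => w x) ≤ LinearMap.ker φ :=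
    Submodule.span_le.2 (range_subset_iff.2 fun x => hφw x x.2)
  have hlt : Submodule.span K (range fun x : (A : Set α) => w x) < Submodule.span K T :=
    lt_of_le_not_ge hle fun hge => hφt (hker (hge (Submodule.subset_span ht)))
  calc A.card = Module.finrank K (Submodule.span K (range fun x : (A : Set α) => w x)) :=
      ((finrank_span_eq_card hw).trans (Fintype.card_coe A)).symm
    _ < Module.finrank K (Submodule.span K (T : Set U)) := Submodule.finrank_lt_finrank_of_lt hlt
    _ ≤ T.card := finrank_span_finset_le_card T

/-! ### Zero-sum sets over `𝔽₂` -/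

section Binary

lemma zmod_two_eq_one_of_ne_zero {a : ZMod 2} (ha : a ≠ 0) : a = 1 :=
  Fin.eq_one_of_ne_zero a ha

lemma rank_zmod_two_le_one_iff_subsingleton {M : Type*} [AddCommGroup M] [Module (ZMod 2) M]
    (S : Submodule (ZMod 2) M) :
    Module.rank (ZMod 2) S ≤ 1 ↔ ((S : Set M) \ {0}).Subsingleton := by
  have eq_of_mem_span {v v₀ : M} (hv : v ∈ Submodule.span (ZMod 2) {v₀}) (hne : v ≠ 0) :
      v = v₀ := by
    obtain ⟨a, rfl⟩ := Submodule.mem_span_singleton.1 hv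
    rw [zmod_two_eq_one_of_ne_zero (left_ne_zero_of_smul hne), one_smul]
  rw [rank_submodule_le_one_iff]
  constructor
  · rintro ⟨v₀, -, hS⟩ x ⟨hx, hx0⟩ y ⟨hy, hy0⟩
    rw [eq_of_mem_span (hS hx) hx0, eq_of_mem_span (hS hy) hy0]
  · intro hS
    obtain hbot | ⟨v₀, hv₀, hne⟩ := eq_or_ne S ⊥ |>.imp_right S.ne_bot_iff.1
    · exact ⟨0, S.zero_mem, hbot ▸ bot_le⟩
    · refine ⟨v₀, hv₀, fun v hv => ?_⟩
      obtain rfl | hv0 := eq_or_ne v 0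
      · exact zero_mem _
      · exact hS ⟨hv₀, hne⟩ ⟨hv, hv0⟩ ▸ Submodule.mem_span_singleton_self v₀

/-- A nonempty finite set of indices whose vectors add up to zero. Over `𝔽₂` these sets are the
supports of the nonzero linear relations; for the boundary vectors of a graph they are the nonempty
elements of its cycle space. -/
def IsZeroSum {α U : Type*} [AddCommMonoid U] (w : α → U) (A : Finset α) : Prop :=
  A.Nonempty ∧ ∑ x ∈ A, w x = 0

section ZeroSum

variable {α U : Type*} [AddCommMonoid U] {w : α → U}

lemma IsZeroSum.sdiff [DecidableEq α] {A B : Finset α} (hA : IsZeroSum w A) (hB : IsZeroSum w B)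
    (hBA : B ⊂ A) : IsZeroSum w (A \ B) := by
  refine ⟨Finset.sdiff_nonempty.2 hBA.2, ?_⟩
  rw [← add_zero (∑ x ∈ A \ B, w x), ← hB.2, Finset.sum_sdiff hBA.1, hA.2, hB.2]

lemma nontrivial_minimal_isZeroSum_iff {X : Set α} :
    {A : Finset α | ↑A ⊆ X ∧ Minimal (IsZeroSum w) A}.Nontrivial ↔
      {A : Finset α | ↑A ⊆ X ∧ IsZeroSum w A}.Nontrivial := by
  classical
  refine ⟨fun h => h.mono fun A hA => ⟨hA.1, hA.2.prop⟩, fun h => ?_⟩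
  contrapose! h
  have minimal_le {A B : Finset α} (hAX : ↑A ⊆ X) (hA : Minimal (IsZeroSum w) A) (hBX : ↑B ⊆ X)
      (hB : IsZeroSum w B) : A ⊆ B := by
    obtain ⟨C, hCB, hC⟩ := exists_minimal_le_of_wellFoundedLT _ B hB
    exact h ⟨hAX, hA⟩ ⟨(Finset.coe_subset.2 hCB).trans hBX, hC⟩ ▸ hCB
  rintro B ⟨hBX, hB⟩ B' ⟨hBX', hB'⟩
  obtain ⟨A, hAB, hA⟩ := exists_minimal_le_of_wellFoundedLT _ B hB
  have hAX := (Finset.coe_subset.2 hAB).trans hBX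
  -- Otherwise `D \ A` would be a zero-sum set disjoint from the only minimal one.
  have eq_A {D : Finset α} (hDX : ↑D ⊆ X) (hD : IsZeroSum w D) : D = A := by
    have hAD := minimal_le hAX hA hDX hD
    by_contra hne
    have hdiff := hD.sdiff hA.prop (hAD.ssubset_of_ne (Ne.symm hne))
    have hdisj := minimal_le hAX hA ((Finset.coe_subset.2 Finset.sdiff_subset).trans hDX) hdiff
    obtain ⟨x, hx⟩ := hA.prop.1
    exact (Finset.mem_sdiff.1 (hdisj hx)).2 hx
  rw [eq_A hBX hB, eq_A hBX' hB']

end ZeroSum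

variable {α U : Type*} [AddCommGroup U] [Module (ZMod 2) U] {w : α → U} {X : Set α}
  {A : Finset α}

lemma linearCombination_eq_sum_support (c : α →₀ ZMod 2) :
    Finsupp.linearCombination (ZMod 2) w c = ∑ x ∈ c.support, w x := by
  rw [Finsupp.linearCombination_apply, Finsupp.sum]
  refine Finset.sum_congr rfl fun x hx => ?_
  rw [zmod_two_eq_one_of_ne_zero (Finsupp.mem_support_iff.1 hx), one_smul]

lemma support_injective : Function.Injective (Finsupp.support : (α →₀ ZMod 2) → Finset α) := by
  refine fun c d h => Finsupp.ext_iff'.2 ⟨h, fun x hx => ?_⟩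
  rw [zmod_two_eq_one_of_ne_zero (Finsupp.mem_support_iff.1 hx),
    zmod_two_eq_one_of_ne_zero (Finsupp.mem_support_iff.1 (h ▸ hx))]

lemma support_surjective : Function.Surjective (Finsupp.support : (α →₀ ZMod 2) → Finset α) := by
  classical
  refine fun A => ⟨Finsupp.indicator A fun _ _ => 1, ?_⟩
  ext x
  simp [Finsupp.indicator_apply]

lemma image_support_relations :
    Finsupp.support '' ((relations (ZMod 2) w X : Set (α →₀ ZMod 2)) \ {0}) =
      {A : Finset α | ↑A ⊆ X ∧ IsZeroSum w A} := by
  ext A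
  obtain ⟨c, rfl⟩ := support_surjective A
  rw [support_injective.mem_set_image, mem_sdiff, SetLike.mem_coe, mem_relations,
    linearCombination_eq_sum_support, mem_singleton_iff, mem_ofPred_eq, IsZeroSum,
    Finsupp.support_nonempty_iff]
  tauto

lemma one_le_nullity_iff :
    1 ≤ nullity (ZMod 2) w X ↔ {A : Finset α | ↑A ⊆ X ∧ IsZeroSum w A}.Nonempty := by
  rw [← image_support_relations, image_nonempty, nullity, Cardinal.one_le_toENat,
    Cardinal.one_le_iff_ne_zero, Ne, Submodule.rank_eq_zero, ← Ne, Submodule.ne_bot_iff]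
  rfl

lemma two_le_nullity_iff :
    2 ≤ nullity (ZMod 2) w X ↔ {A : Finset α | ↑A ⊆ X ∧ IsZeroSum w A}.Nontrivial := by
  rw [← image_support_relations, support_injective.injOn.image_nontrivial_iff,
    ← not_subsingleton_iff, ← rank_zmod_two_le_one_iff_subsingleton, not_le, nullity,
    Cardinal.ofNat_le_toENat, Cardinal.two_le_iff_one_lt]

lemma linearIndepOn_erase_of_minimal_isZeroSum [DecidableEq α]
    (hA : Minimal (IsZeroSum w) A) {e : α} (he : e ∈ A) :
    LinearIndepOn (ZMod 2) w (A.erase e : Finset α) := by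
  rw [linearIndepOn_iff]
  intro c hcA hc
  by_contra hne
  rw [Finsupp.mem_supported, Finset.coe_subset] at hcA
  have hzero : IsZeroSum w c.support :=
    ⟨Finsupp.support_nonempty_iff.2 hne, (linearCombination_eq_sum_support c).symm.trans hc⟩
  exact (Finset.mem_erase.1 (hcA (hA.le_of_le hzero (hcA.trans (A.erase_subset e)) he))).1 rfl

end Binary

/-! ### Cycles of a graph as minimal zero-sum sets -/

section EndVec

/-- The sum of the unit vectors at the two ends of an edge, a loop counting twice. Over `ℕ` these
vectors record degrees, over `𝔽₂` they are the boundaries of the edges. -/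
noncomputable def endVec (R : Type*) [Semiring R] {V : Type*} : Sym2 V → V →₀ R :=
  Sym2.lift ⟨fun a b => Finsupp.single a 1 + Finsupp.single b 1, fun _ _ => add_comm _ _⟩

variable {R V V' : Type*} [Semiring R]

lemma endVec_mk (a b : V) : endVec R s(a, b) = Finsupp.single a 1 + Finsupp.single b 1 := rfl

lemma degree_endVec (z : Sym2 V) : (endVec R z).degree = 2 := by
  induction z with
  | _ a b =>
    rw [endVec_mk, map_add, Finsupp.degree_single, Finsupp.degree_single, one_add_one_eq_two]

lemma endVec_map (π : V → V') (z : Sym2 V) :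
    endVec R (z.map π) = Finsupp.mapDomain π (endVec R z) := by
  induction z with
  | _ a b =>
    rw [Sym2.map_mk, endVec_mk, endVec_mk, Finsupp.mapDomain_add, Finsupp.mapDomain_single,
      Finsupp.mapDomain_single]

lemma natCast_endVec_apply (z : Sym2 V) (v : V) : ((endVec ℕ z v : ℕ) : R) = endVec R z v := by
  classical
  induction z with
  | _ a b => simp [endVec_mk, Finsupp.single_apply]

lemma endVec_nat_apply [DecidableEq V] (z : Sym2 V) (v : V) :
    endVec ℕ z v = (if v ∈ z then 1 else 0) + (if z = Sym2.diag v then 1 else 0) := by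
  induction z with
  | _ a b =>
    have hdiag : s(a, b) = Sym2.diag v ↔ a = v ∧ b = v := by
      simp [Sym2.diag]
    simp only [endVec_mk, Finsupp.add_apply, Finsupp.single_apply, Sym2.mem_iff, hdiag,
      eq_comm (a := v)]
    split_ifs <;> simp_all

lemma endVec_nat_pos_iff {z : Sym2 V} {v : V} : 0 < endVec ℕ z v ↔ v ∈ z := by
  classical
  induction z with
  | _ a b =>
    simp only [endVec_mk, Finsupp.add_apply, Finsupp.single_apply, Sym2.mem_iff]
    grind

lemma endVec_mem_span_single {z : Sym2 V} {S : Set V} (hz : ∀ v ∈ z, v ∈ S) :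
    endVec R z ∈ Submodule.span R ((fun v => Finsupp.single v (1 : R)) '' S) := by
  induction z with
  | _ a b =>
    exact add_mem (Submodule.subset_span (mem_image_of_mem _ (hz a (Sym2.mem_mk_left a b))))
      (Submodule.subset_span (mem_image_of_mem _ (hz b (Sym2.mem_mk_right a b))))

lemma filter_endVec {p : V → Prop} [DecidablePred p] {z : Sym2 V}
    [Decidable (∃ a ∈ z, p a)] (hz : ∀ a ∈ z, ∀ b ∈ z, p a → p b) :
    (endVec R z).filter p = if ∃ a ∈ z, p a then endVec R z else 0 := by
  split_ifs with h
  · obtain ⟨a, ha, hpa⟩ := h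
    induction z with
    | _ b c =>
      rw [endVec_mk, Finsupp.filter_add,
        Finsupp.filter_single_of_pos _ (hz a ha b (Sym2.mem_mk_left b c) hpa),
        Finsupp.filter_single_of_pos _ (hz a ha c (Sym2.mem_mk_right b c) hpa)]
  · induction z with
    | _ b c =>
      rw [endVec_mk, Finsupp.filter_add,
        Finsupp.filter_single_of_neg _ fun hb => h ⟨b, Sym2.mem_mk_left b c, hb⟩,
        Finsupp.filter_single_of_neg _ fun hc => h ⟨c, Sym2.mem_mk_right b c, hc⟩, add_zero]

end EndVec

section Cycle

/-- The boundary of the edge `x` over `𝔽₂`, that is, its column in the incidence matrix: the sum of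
its two ends, which vanishes for a loop. -/
noncomputable def boundary {V α : Type*} (i : α → Sym2 V) (x : α) : V →₀ ZMod 2 :=
  endVec (ZMod 2) (i x)

namespace Graph

variable {V α : Type u} {G : Graph V α} {A B : Finset α} {v : V}

/-- The degree sequence of the edge set `A`, bundled as a finitely supported function so that the
handshake lemma can be stated with `Finsupp.degree`. -/
noncomputable def degVec (G : Graph V α) (A : Finset α) : V →₀ ℕ := ∑ x ∈ A, endVec ℕ (G.inc x)

lemma degVec_apply : G.degVec A v = G.deg A v := by
  classical
  simp only [degVec, deg, Finsupp.finsetSum_apply, endVec_nat_apply, Finset.sum_add_distrib,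
    ← Finset.card_filter, ← Set.ncard_coe_finset, Finset.coe_filter, Finset.mem_coe]

lemma degree_degVec : (G.degVec A).degree = 2 * A.card := by
  rw [degVec, map_sum, Finset.sum_congr rfl fun x _ => degree_endVec (G.inc x),
    Finset.sum_const, smul_eq_mul, mul_comm]

lemma deg_pos_iff : 0 < G.deg A v ↔ v ∈ G.vertsOf A := by
  rw [← degVec_apply, degVec, Finsupp.finsetSum_apply, Finset.sum_pos_iff]
  simp only [endVec_nat_pos_iff]
  rfl

lemma coe_support_degVec : ↑(G.degVec A).support = G.vertsOf A := by
  ext v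
  rw [Finset.mem_coe, Finsupp.mem_support_iff, ← Nat.pos_iff_ne_zero, degVec_apply, deg_pos_iff]

lemma sum_boundary_eq_zero_iff :
    ∑ x ∈ A, boundary G.inc x = 0 ↔ ∀ v, Even (G.deg A v) := by
  simp only [Finsupp.ext_iff, Finsupp.finsetSum_apply, ← degVec_apply, degVec,
    ← ZMod.natCast_eq_zero_iff_even, Nat.cast_sum, natCast_endVec_apply, boundary,
    Finsupp.coe_zero, Pi.zero_apply]

lemma card_le_card_of_minimal_isZeroSum (hA : Minimal (IsZeroSum (boundary G.inc)) A) :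
    A.card ≤ (G.degVec A).support.card := by
  classical
  obtain ⟨e, he⟩ := hA.prop.1
  obtain ⟨v, hv⟩ : ∃ v, v ∈ G.inc e := ⟨_, Sym2.out_fst_mem _⟩
  let S := (G.degVec A).support
  have hS {x : α} (hx : x ∈ A) {u : V} (hu : u ∈ G.inc x) : u ∈ S := by
    rw [← Finset.mem_coe, coe_support_degVec]
    exact ⟨x, hx, hu⟩
  -- The boundaries of `A.erase e` are independent and have even coordinate sum, so they do not span
  -- the space `𝔽₂ ^ S` that contains them.
  have hlt : (A.erase e).card < (S.image fun u => Finsupp.single u (1 : ZMod 2)).card := by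
    refine card_lt_card_of_linearIndepOn (Finsupp.degree.toZModLinearMap 2)
      (linearIndepOn_erase_of_minimal_isZeroSum hA he) (fun x hx => ?_) (fun _ _ => ?_)
      (Finset.mem_image_of_mem _ (hS he hv)) ?_
    · rw [Finset.coe_image]
      exact endVec_mem_span_single fun u hu => hS (Finset.mem_of_mem_erase hx) hu
    · exact degree_endVec _
    · simp
  rw [Finset.card_erase_of_mem he] at hlt
  exact Nat.le_of_pred_lt (hlt.trans_le Finset.card_image_le)

lemma deg_eq_two_of_minimal_isZeroSum (hA : Minimal (IsZeroSum (boundary G.inc)) A)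
    (hv : v ∈ G.vertsOf A) : G.deg A v = 2 := by
  have two_le : ∀ u ∈ (G.degVec A).support, 2 ≤ G.degVec A u := by
    intro u hu
    have heven : Even (G.degVec A u) := degVec_apply ▸ sum_boundary_eq_zero_iff.1 hA.prop.2 u
    have hne := Finsupp.mem_support_iff.1 hu
    grind
  -- The degrees add up to `2 * A.card`, which is at most twice the number of vertices.
  have hsum : ∑ u ∈ (G.degVec A).support, 2 = ∑ u ∈ (G.degVec A).support, G.degVec A u := by
    refine le_antisymm (Finset.sum_le_sum two_le) ?_
    rw [← Finsupp.degree_apply, degree_degVec, Finset.sum_const, smul_eq_mul, mul_comm]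
    exact Nat.mul_le_mul_right 2 (card_le_card_of_minimal_isZeroSum hA)
  rw [← coe_support_degVec] at hv
  rw [← degVec_apply, ← (Finset.sum_eq_sum_iff_of_le two_le).1 hsum v hv]

lemma reflTransGen_adjOn_of_mem {X : Set α} {x : α} {u a b : V} (hx : x ∈ X) (ha : a ∈ G.inc x)
    (hb : b ∈ G.inc x) (hua : Relation.ReflTransGen (G.AdjOn X) u a) :
    Relation.ReflTransGen (G.AdjOn X) u b := by
  obtain rfl | hne := eq_or_ne a b
  · exact hua
  · exact hua.tail ⟨x, hx, (Sym2.mem_and_mem_iff hne).1 ⟨ha, hb⟩⟩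

lemma connectedOn_of_minimal_isZeroSum (hA : Minimal (IsZeroSum (boundary G.inc)) A) :
    G.ConnectedOn A := by
  classical
  rintro u ⟨e, he, hue⟩ v ⟨x, hx, hvx⟩
  let reach (y : V) : Prop := Relation.ReflTransGen (G.AdjOn A) u y
  -- Restricting the relation `∑ x ∈ A, boundary x = 0` to a component leaves a relation.
  have hcomponent : IsZeroSum (boundary G.inc) {x ∈ A | ∃ a ∈ G.inc x, reach a} := by
    refine ⟨⟨e, Finset.mem_filter.2 ⟨he, u, hue, .refl⟩⟩, ?_⟩
    have hfilter := congrArg (Finsupp.filterAddHom reach) hA.prop.2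
    rw [map_sum, map_zero] at hfilter
    rw [Finset.sum_filter]
    exact (Finset.sum_congr rfl fun x hx => (filter_endVec fun a ha b hb =>
      reflTransGen_adjOn_of_mem (Finset.mem_coe.2 hx) ha hb).symm).trans hfilter
  obtain ⟨a, hax, ha⟩ :=
    (Finset.mem_filter.1 (hA.le_of_le hcomponent (Finset.filter_subset _ A) hx)).2
  exact reflTransGen_adjOn_of_mem hx hax hvx ha

lemma IsCycle.mem_of_isZeroSum (hA : G.IsCycle A) (hB : IsZeroSum (boundary G.inc) B)
    (hBA : B ⊆ A) (hv : v ∈ G.vertsOf B) {x : α} (hx : x ∈ A) (hvx : v ∈ G.inc x) : x ∈ B := by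
  classical
  by_contra hxB
  have hsum : G.degVec (A \ B) + G.degVec B = G.degVec A := Finset.sum_sdiff hBA
  have hdeg := DFunLike.congr_fun hsum v
  rw [Finsupp.add_apply, degVec_apply, degVec_apply, degVec_apply,
    hA.2.2.2.1 v ⟨x, hx, hvx⟩] at hdeg
  have hposB : 0 < G.deg B v := deg_pos_iff.2 hv
  have hpos : 0 < G.deg (A \ B : Finset α) v :=
    deg_pos_iff.2 ⟨x, Finset.mem_coe.2 (Finset.mem_sdiff.2 ⟨hx, hxB⟩), hvx⟩
  have heven : Even (G.deg B v) := sum_boundary_eq_zero_iff.1 hB.2 v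
  grind

lemma IsCycle.minimal_isZeroSum (hA : G.IsCycle A) : Minimal (IsZeroSum (boundary G.inc)) A := by
  have ⟨_, _, hne, hdeg, hconn⟩ := hA
  refine ⟨⟨hne, sum_boundary_eq_zero_iff.2 fun v => ?_⟩, fun B hB hBA x hx => ?_⟩
  · by_cases hv : v ∈ G.vertsOf A
    · exact hdeg v hv ▸ even_two
    · exact Nat.eq_zero_of_not_pos (mt deg_pos_iff.1 hv) ▸ Even.zero
  · have hverts {u v : V} (hu : u ∈ G.vertsOf B) (huv : Relation.ReflTransGen (G.AdjOn A) u v) :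
        v ∈ G.vertsOf B := by
      induction huv with
      | refl => exact hu
      | @tail b c _ hbc hb =>
        obtain ⟨y, hy, hybc⟩ := hbc
        exact ⟨y, hA.mem_of_isZeroSum hB hBA hb hy (hybc ▸ Sym2.mem_mk_left b c),
          hybc ▸ Sym2.mem_mk_right b c⟩
    obtain ⟨y, hy⟩ := hB.1
    obtain ⟨u, hu⟩ : ∃ u, u ∈ G.inc y := ⟨_, Sym2.out_fst_mem _⟩
    obtain ⟨v, hv⟩ : ∃ v, v ∈ G.inc x := ⟨_, Sym2.out_fst_mem _⟩
    exact hA.mem_of_isZeroSum hB hBA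
      (hverts ⟨y, hy, hu⟩ (hconn u ⟨y, hBA hy, hu⟩ v ⟨x, hx, hv⟩)) hx hv

lemma isCycle_coe_iff :
    G.IsCycle A ↔ ↑A ⊆ G.E ∧ Minimal (IsZeroSum (boundary G.inc)) A :=
  ⟨fun hA => ⟨hA.1, hA.minimal_isZeroSum⟩, fun ⟨hAE, hA⟩ =>
    ⟨hAE, A.finite_toSet, hA.prop.1, fun _ => deg_eq_two_of_minimal_isZeroSum hA,
      connectedOn_of_minimal_isZeroSum hA⟩⟩

variable {X C : Set α}

lemma setOf_isCycle_eq_image_coe (hX : X ⊆ G.E) :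
    {C | G.IsCycle C ∧ C ⊆ X} = (fun A : Finset α => (A : Set α)) ''
      {A | ↑A ⊆ X ∧ Minimal (IsZeroSum (boundary G.inc)) A} := by
  ext C
  constructor
  · rintro ⟨hC, hCX⟩
    obtain ⟨A, rfl⟩ := hC.2.1.exists_finset_coe
    exact ⟨A, ⟨hCX, (isCycle_coe_iff.1 hC).2⟩, rfl⟩
  · rintro ⟨A, ⟨hAX, hA⟩, rfl⟩
    exact ⟨isCycle_coe_iff.2 ⟨hAX.trans hX, hA⟩, hAX⟩

lemma exists_isCycle_subset_iff (hX : X ⊆ G.E) :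
    (∃ C, G.IsCycle C ∧ C ⊆ X) ↔ 1 ≤ nullity (ZMod 2) (boundary G.inc) X := by
  change {C | G.IsCycle C ∧ C ⊆ X}.Nonempty ↔ _
  rw [setOf_isCycle_eq_image_coe hX, image_nonempty, one_le_nullity_iff]
  constructor
  · exact fun ⟨A, hAX, hA⟩ => ⟨A, hAX, hA.prop⟩
  · rintro ⟨A, hAX, hA⟩
    obtain ⟨B, hBA, hB⟩ := exists_minimal_le_of_wellFoundedLT _ A hA
    exact ⟨B, (Finset.coe_subset.2 hBA).trans hAX, hB⟩

lemma hasTwoCycles_iff (hX : X ⊆ G.E) :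
    G.HasTwoCycles X ↔ 2 ≤ nullity (ZMod 2) (boundary G.inc) X := by
  rw [two_le_nullity_iff, ← nontrivial_minimal_isZeroSum_iff,
    ← Finset.coe_injective.injOn.image_nontrivial_iff, ← setOf_isCycle_eq_image_coe hX]
  constructor
  · exact fun ⟨C, D, hC, hD, hCD, hCX, hDX⟩ => ⟨C, ⟨hC, hCX⟩, D, ⟨hD, hDX⟩, hCD⟩
  · exact fun ⟨C, ⟨hC, hCX⟩, D, ⟨hD, hDX⟩, hCD⟩ => ⟨C, D, hC, hD, hCD, hCX, hDX⟩

lemma IsCycle.eq_of_subset {C D : Set α} (hC : G.IsCycle C) (hD : G.IsCycle D) (h : C ⊆ D) :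
    C = D := by
  obtain ⟨A, rfl⟩ := hC.2.1.exists_finset_coe
  obtain ⟨B, rfl⟩ := hD.2.1.exists_finset_coe
  exact h.antisymm (hD.minimal_isZeroSum.le_of_le hC.minimal_isZeroSum.prop h)

lemma isCycle_iff_minimal :
    G.IsCycle C ↔ Minimal (fun X => X ⊆ G.E ∧ ∃ D, G.IsCycle D ∧ D ⊆ X) C := by
  constructor
  · refine fun hC => ⟨⟨hC.1, C, hC, subset_rfl⟩, ?_⟩
    rintro X ⟨-, D, hD, hDX⟩ hXC
    exact (hD.eq_of_subset hC (hDX.trans hXC)).symm.trans_subset hDX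
  · intro hC
    obtain ⟨-, D, hD, hDC⟩ := hC.prop
    exact (hC.eq_of_subset ⟨hD.1, D, hD, subset_rfl⟩ hDC) ▸ hD

end Graph

end Cycle

/-! ### Matroids represented by nullity -/

section Matroid

variable {α : Type u} {N : Matroid α} {e f : α} {X : Set α}

lemma circuit_iff_minimal_iff {P : Set α → Prop} (hmono : Monotone P)
    (hfin : ∀ X, P X → ∃ Y ⊆ X, Y.Finite ∧ P Y) :
    (∀ C, Circuit N C ↔ Minimal (fun X => X ⊆ N.E ∧ P X) C) ↔ ∀ X ⊆ N.E, (N.Dep X ↔ P X) := by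
  constructor
  · intro h X hX
    constructor
    · intro hdep
      obtain ⟨C, hCX, hC⟩ := (dep_iff_superset_isCircuit hX).1 hdep
      exact hmono hCX ((h C).1 hC).prop.2
    · intro hPX
      obtain ⟨Y, hYX, hY, hPY⟩ := hfin X hPX
      obtain ⟨C, hCY, hC⟩ := (hY.finite_subsets.inter_of_left {Z | P Z}).exists_le_minimal
        (⟨Subset.refl Y, hPY⟩ : Y ∈ {Z | Z ⊆ Y} ∩ {Z | P Z})
      refine ((h C).2 ⟨⟨hCY.trans (hYX.trans hX), hC.prop.2⟩, ?_⟩).prop.superset (hCY.trans hYX) hX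
      exact fun Z hZ hZC => hC.le_of_le ⟨hZC.trans hCY, hZ.2⟩ hZC
  · intro h C
    have hdep : N.Dep = fun X => X ⊆ N.E ∧ P X := by
      ext X
      exact ⟨fun hX => ⟨hX.subset_ground, (h X hX.subset_ground).1 hX⟩,
        fun hX => (h X hX.1).2 hX.2⟩
    rw [Circuit, hdep]

lemma con_dep_iff (he : N.Indep {e}) (heX : e ∉ X) : (con N {e}).Dep X ↔ N.Dep (insert e X) := by
  change (N ／ {e}).Dep X ↔ _
  rw [he.contract_dep_iff, union_singleton, and_iff_right (disjoint_singleton_right.2 heX)]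

lemma SeriesPair.symm (h : SeriesPair N e f) : SeriesPair N f e :=
  ⟨fun C hC => (h.1 C hC).symm, let ⟨C, hC, he, hf⟩ := h.2; ⟨C, hC, hf, he⟩⟩

lemma SeriesPair.mem_ground (h : SeriesPair N e f) : e ∈ N.E :=
  let ⟨_, hC, he, _⟩ := h.2
  hC.prop.subset_ground he

lemma SeriesPair.indep_singleton (h : SeriesPair N e f) (hef : e ≠ f) : N.Indep {e} := by
  obtain ⟨C, hC, heC, hfC⟩ := h.2
  refine IsCircuit.ssubset_indep hC (ssubset_iff_of_subset (singleton_subset_iff.2 heC) |>.2 ?_)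
  exact ⟨f, hfC, hef.symm⟩

lemma SeriesPair.dep_sdiff_singleton_iff (h : SeriesPair N e f) (hX : X ⊆ N.E) (he : e ∉ X) :
    N.Dep (X \ {f}) ↔ N.Dep X := by
  refine ⟨fun hdep => hdep.superset sdiff_subset hX, fun hdep => ?_⟩
  obtain ⟨C, hCX, hC⟩ := (dep_iff_superset_isCircuit hX).1 hdep
  have hfC : f ∉ C := fun hfC => he (hCX ((h.1 C hC).2 hfC))
  exact hC.dep.superset (subset_sdiff_singleton hCX hfC) (sdiff_subset.trans hX)

/-- The vectors `w` represent `N` at level `k`: a set is dependent when its nullity is at least `k`.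
For `k = 1` this says that `N` is the vector matroid of `w`. If `w` is the family of boundaries of
the edges of a graph `G` over `𝔽₂`, then `k = 1` means `N = M(G)` and `k = 2` means `N = L(G)`. -/
def IsNullityRep (K : Type*) {U : Type*} [DivisionRing K] [AddCommGroup U] [Module K U] (k : ℕ)
    (w : α → U) (N : Matroid α) : Prop :=
  ∀ X ⊆ N.E, (N.Dep X ↔ k ≤ nullity K w X)

variable {K U U' : Type*} [DivisionRing K] [AddCommGroup U] [Module K U] [AddCommGroup U']
  [Module K U'] {k : ℕ} {w : α → U}

lemma IsNullityRep.ne_zero (h : IsNullityRep K k w N) : k ≠ 0 := by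
  rintro rfl
  exact ((h ∅ (empty_subset _)).2 (by simp)).not_indep N.empty_indep

lemma IsNullityRep.congr {w' : α → U} (h : IsNullityRep K k w N) (hw : EqOn w w' N.E) :
    IsNullityRep K k w' N := fun X hX => by
  rw [h X hX, nullity_congr (hw.mono hX)]

lemma isNullityRep_con_iff_of_ker_eq_span (he : N.Indep {e}) (φ : U →ₗ[K] U')
    (hφ : LinearMap.ker φ = K ∙ w e) (hw : w e ≠ 0) :
    IsNullityRep K k (φ ∘ w) (con N {e}) ↔
      ∀ X ⊆ N.E, e ∈ X → (N.Dep X ↔ k ≤ nullity K w X) := by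
  have heE := singleton_subset_iff.1 he.subset_ground
  constructor
  · intro h X hX heX
    have heX' : e ∉ X \ {e} := notMem_sdiff_of_mem rfl
    have hX' := h (X \ {e}) (sdiff_subset_sdiff_left hX)
    rwa [con_dep_iff he heX', nullity_comp_eq_nullity_insert φ hφ hw heX',
      insert_sdiff_self_of_mem heX] at hX'
  · intro h X hX
    obtain ⟨hXE, heX⟩ := subset_sdiff.1 hX
    rw [disjoint_singleton_right] at heX
    rw [con_dep_iff he heX, nullity_comp_eq_nullity_insert φ hφ hw heX]
    exact h _ (insert_subset heE hXE) (mem_insert e X)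

lemma IsNullityRep.con_of_eq_zero (h : IsNullityRep K (k + 1) w N) (he : N.Indep {e})
    (hw : w e = 0) : IsNullityRep K k w (con N {e}) := by
  intro X hX
  obtain ⟨hXE, heX⟩ := subset_sdiff.1 hX
  rw [disjoint_singleton_right] at heX
  rw [con_dep_iff he heX, h _ (insert_subset (singleton_subset_iff.1 he.subset_ground) hXE),
    nullity_insert_of_eq_zero hw heX, Nat.cast_add_one, ENat.add_le_add_iff_right ENat.one_ne_top]

lemma SeriesPair.isNullityRep_con_iff (h : SeriesPair N e f) (hef : e ≠ f) (φ : U →ₗ[K] U')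
    (hφ : LinearMap.ker φ = K ∙ w e) (hw : w e ≠ 0)
    (hc : ∀ c, Finsupp.linearCombination K w c = 0 → c e = c f) :
    IsNullityRep K k (φ ∘ w) (con N {e}) ↔ IsNullityRep K k w N := by
  rw [isNullityRep_con_iff_of_ker_eq_span (h.indep_singleton hef) φ hφ hw]
  refine ⟨fun hN X hX => ?_, fun hN X hX _ => hN X hX⟩
  by_cases heX : e ∈ X
  · exact hN X hX heX
  -- Neither side changes when `f` is exchanged for `e`.
  let Y := insert e (X \ {f})
  have hY : Y ⊆ N.E := insert_subset h.mem_ground (sdiff_subset.trans hX)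
  have hfY : f ∉ Y := by simp [Y, hef.symm]
  have hYe : Y \ {e} = X \ {f} := insert_sdiff_self_of_notMem fun he => heX he.1
  rw [← h.dep_sdiff_singleton_iff hX heX, ← nullity_sdiff_singleton hc heX, ← hYe,
    h.symm.dep_sdiff_singleton_iff hY hfY, nullity_sdiff_singleton (fun c h0 => (hc c h0).symm) hfY]
  exact hN Y hY (mem_insert e _)

end Matroid

/-! ### Contraction and subdivision of represented matroids -/

section GraphRepresentation

variable {α : Type u} {N : Matroid α} {e f : α}

section Representation

variable {V : Type u} {G : Graph V α}

lemma isGraphicRep_iff :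
    IsGraphicRep G N ↔ N.E = G.E ∧ IsNullityRep (ZMod 2) 1 (boundary G.inc) N := by
  refine and_congr_right fun hE => ?_
  have hmono : Monotone fun X => ∃ D, G.IsCycle D ∧ D ⊆ X :=
    fun X Y hXY ⟨D, hD, hDX⟩ => ⟨D, hD, hDX.trans hXY⟩
  have hfin : ∀ X, (∃ D, G.IsCycle D ∧ D ⊆ X) → ∃ Y ⊆ X, Y.Finite ∧ ∃ D, G.IsCycle D ∧ D ⊆ Y :=
    fun X ⟨D, hD, hDX⟩ => ⟨D, hDX, hD.2.1, D, hD, subset_rfl⟩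
  rw [forall_congr' fun C => iff_congr Iff.rfl Graph.isCycle_iff_minimal, ← hE,
    circuit_iff_minimal_iff hmono hfin]
  exact forall₂_congr fun X hX => by
    rw [Graph.exists_isCycle_subset_iff (hX.trans_eq hE), Nat.cast_one]

lemma isLiftRep_iff :
    IsLiftRep G N ↔ N.E = G.E ∧ IsNullityRep (ZMod 2) 2 (boundary G.inc) N := by
  refine and_congr_right fun hE => ?_
  have hmono : Monotone G.HasTwoCycles := fun X Y hXY ⟨C, D, hC, hD, hCD, hCX, hDX⟩ =>
    ⟨C, D, hC, hD, hCD, hCX.trans hXY, hDX.trans hXY⟩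
  have hfin : ∀ X, G.HasTwoCycles X → ∃ Y ⊆ X, Y.Finite ∧ G.HasTwoCycles Y :=
    fun X ⟨C, D, hC, hD, hCD, hCX, hDX⟩ => ⟨C ∪ D, union_subset hCX hDX, hC.2.1.union hD.2.1,
      C, D, hC, hD, hCD, subset_union_left, subset_union_right⟩
  simp only [Graph.LiftCircuit, ← hE]
  rw [circuit_iff_minimal_iff hmono hfin]
  exact forall₂_congr fun X hX => by rw [Graph.hasTwoCycles_iff (hX.trans_eq hE), Nat.cast_ofNat]

end Representation

lemma inBL_iff :
    InBL N ↔ ∃ k ≤ 2, ∃ (V : Type u) (i : α → Sym2 V), IsNullityRep (ZMod 2) k (boundary i) N := by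
  simp only [InBL, IsGraphic, IsBicircularLift, isGraphicRep_iff, isLiftRep_iff]
  constructor
  · rintro (⟨V, G, -, hG⟩ | ⟨V, G, -, hG⟩)
    · exact ⟨1, one_le_two, V, G.inc, hG⟩
    · exact ⟨2, le_rfl, V, G.inc, hG⟩
  · rintro ⟨k, hk, V, i, hi⟩
    obtain rfl | rfl : k = 1 ∨ k = 2 := by
      have := hi.ne_zero
      omega
    · exact .inl ⟨V, ⟨N.E, i⟩, rfl, hi⟩
    · exact .inr ⟨V, ⟨N.E, i⟩, rfl, hi⟩

section Identify

variable {V V' : Type*}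

lemma ker_lmapDomain_eq_span {K : Type*} [Ring K] {π : V → V'} {a b : V} (hab : a ≠ b)
    (hπ : π a = π b) (hinj : InjOn π {a}ᶜ) :
    LinearMap.ker (Finsupp.lmapDomain K K π) =
      K ∙ (Finsupp.single a 1 - Finsupp.single b 1 : V →₀ K) := by
  apply le_antisymm
  · intro c hc
    let d := c - c a • (Finsupp.single a 1 - Finsupp.single b 1 : V →₀ K)
    have hda : d a = 0 := by simp [d, hab]
    have hdmap : d.mapDomain π = 0 := by
      rw [LinearMap.mem_ker, Finsupp.lmapDomain_apply] at hc
      rw [Finsupp.mapDomain_sub, hc, Finsupp.mapDomain_smul, Finsupp.mapDomain_sub,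
        Finsupp.mapDomain_single, Finsupp.mapDomain_single, hπ, sub_self, smul_zero, sub_zero]
    have hd : d = 0 := by
      refine Finsupp.mapDomain_injOn _ hinj ?_ ?_ (hdmap.trans Finsupp.mapDomain_zero.symm)
      · rw [mem_ofPred_eq, subset_compl_singleton_iff, Finset.mem_coe]
        exact Finsupp.notMem_support_iff.2 hda
      · simp
    exact Submodule.mem_span_singleton.2 ⟨c a, (sub_eq_zero.1 hd).symm⟩
  · rw [Submodule.span_singleton_le_iff_mem, LinearMap.mem_ker, map_sub,
      Finsupp.lmapDomain_apply, Finsupp.lmapDomain_apply, Finsupp.mapDomain_single,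
      Finsupp.mapDomain_single, hπ, sub_self]

lemma boundary_map (π : V → V') (i : α → Sym2 V) :
    boundary (fun x => (i x).map π) = Finsupp.lmapDomain (ZMod 2) (ZMod 2) π ∘ boundary i :=
  funext fun x => endVec_map π (i x)

lemma ker_lmapDomain_eq_span_boundary {i : α → Sym2 V} {π : V → V'} {a b : V}
    (he : i e = s(a, b)) (hab : a ≠ b) (hπ : π a = π b) (hinj : InjOn π {a}ᶜ) :
    LinearMap.ker (Finsupp.lmapDomain (ZMod 2) (ZMod 2) π) = ZMod 2 ∙ boundary i e := by
  rw [ker_lmapDomain_eq_span hab hπ hinj, boundary, he, endVec_mk, ZModModule.sub_eq_add]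

lemma boundary_ne_zero {i : α → Sym2 V} {a b : V} (he : i e = s(a, b)) (hab : a ≠ b) :
    boundary i e ≠ 0 := fun h => by
  simpa [boundary, he, endVec_mk, hab] using DFunLike.congr_fun h a

lemma boundary_eq_zero {i : α → Sym2 V} {a : V} (he : i e = s(a, a)) : boundary i e = 0 := by
  rw [boundary, he, endVec_mk, ZModModule.add_self]

end Identify

lemma IsNullityRep.exists_con {V : Type u} {i : α → Sym2 V} {k : ℕ}
    (h : IsNullityRep (ZMod 2) k (boundary i) N) (he : N.Indep {e}) :
    ∃ j ≤ k, ∃ (V' : Type u) (i' : α → Sym2 V'),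
      IsNullityRep (ZMod 2) j (boundary i') (con N {e}) := by
  classical
  obtain ⟨⟨a, b⟩, hab : s(a, b) = i e⟩ := Sym2.mk_surjective (i e)
  obtain rfl | hne := eq_or_ne a b
  · obtain ⟨j, rfl⟩ := Nat.exists_eq_add_one_of_ne_zero h.ne_zero
    exact ⟨j, j.le_succ, V, i, h.con_of_eq_zero he (boundary_eq_zero hab.symm)⟩
  · let π : V → V := Function.update id a b
    have hπ : π a = π b := by simp [π, hne.symm]
    have hinj : InjOn π {a}ᶜ :=
      (injOn_id _).congr fun x hx => (Function.update_of_ne hx b id).symm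
    refine ⟨k, le_rfl, V, fun x => (i x).map π, ?_⟩
    rw [boundary_map, isNullityRep_con_iff_of_ker_eq_span he _
      (ker_lmapDomain_eq_span_boundary hab.symm hne hπ hinj) (boundary_ne_zero hab.symm hne)]
    exact fun X hX _ => h X hX

section Subdivide

variable {V : Type*}

open Classical in
/-- The graph obtained from `i` by subdividing the edge `f = uv` with a new vertex `none`: the edge
`f` becomes `u none` and the new edge `e` is `none v`. -/
noncomputable def subdivide (i : α → Sym2 V) (e f : α) (u v : V) : α → Sym2 (Option V) :=
  fun x => if x = e then s(none, some v) else if x = f then s(some u, none) else (i x).map some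

variable {i : α → Sym2 V} {u v : V}

lemma subdivide_left : subdivide i e f u v e = s(none, some v) := if_pos rfl

lemma map_getD_subdivide (hf : i f = s(u, v)) {x : α} (hx : x ≠ e) :
    (subdivide i e f u v x).map (·.getD v) = i x := by
  rw [subdivide, if_neg hx]
  split_ifs with hxf
  · rw [hxf, hf, Sym2.map_mk]
    rfl
  · rw [Sym2.map_map]
    exact Sym2.map_id' ▸ rfl

lemma boundary_subdivide_none (hef : e ≠ f) (x : α) :
    boundary (subdivide i e f u v) x none =
      Finsupp.single x (1 : ZMod 2) e + Finsupp.single x (1 : ZMod 2) f := by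
  rw [boundary, subdivide]
  split_ifs with hxe hxf
  · simp [endVec_mk, hxe, hef]
  · simp [endVec_mk, hxf, hef.symm]
  · rw [endVec_map, Finsupp.mapDomain_of_notMem_range _ _ (by simp), Finsupp.single_eq_of_ne' hxe,
      Finsupp.single_eq_of_ne' hxf, add_zero]

-- Read off the coordinate of the new vertex, which is an end of `e` and `f` only.
lemma apply_eq_apply_of_linearCombination_subdivide_eq_zero (hef : e ≠ f) {c : α →₀ ZMod 2}
    (hc : Finsupp.linearCombination (ZMod 2) (boundary (subdivide i e f u v)) c = 0) :
    c e = c f := by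
  have hnone : Finsupp.lapply none ∘ₗ
      Finsupp.linearCombination (ZMod 2) (boundary (subdivide i e f u v)) =
        Finsupp.lapply e + Finsupp.lapply f := by
    ext x
    simp [boundary_subdivide_none hef]
  have hsum := LinearMap.congr_fun hnone c
  rw [LinearMap.comp_apply, hc, map_zero] at hsum
  exact CharTwo.add_eq_zero.1 hsum.symm

lemma IsNullityRep.exists_of_con {V : Type u} {i : α → Sym2 V} {k : ℕ}
    (hi : IsNullityRep (ZMod 2) k (boundary i) (con N {e})) (h : SeriesPair N e f) (hef : e ≠ f) :
    ∃ (V' : Type u) (i' : α → Sym2 V'), IsNullityRep (ZMod 2) k (boundary i') N := by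
  obtain ⟨⟨u, v⟩, huv⟩ := Sym2.mk_surjective (i f)
  let i' := subdivide i e f u v
  let π : Option V → V := (·.getD v)
  have hπ : EqOn (boundary i) (Finsupp.lmapDomain (ZMod 2) (ZMod 2) π ∘ boundary i')
      (con N {e}).E := fun x hx => by
    rw [← boundary_map, boundary, boundary, map_getD_subdivide huv.symm hx.2]
  have hinj : InjOn π {none}ᶜ := by
    rintro (_ | x) hx (_ | y) hy hxy
    · rfl
    · exact (hx rfl).elim
    · exact (hy rfl).elim
    · exact congrArg some hxy
  refine ⟨Option V, i', (h.isNullityRep_con_iff hef _ ?_ ?_ ?_).1 (hi.congr hπ)⟩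
  · exact ker_lmapDomain_eq_span_boundary subdivide_left nofun rfl hinj
  · exact boundary_ne_zero subdivide_left nofun
  · exact fun c => apply_eq_apply_of_linearCombination_subdivide_eq_zero hef

end Subdivide

end GraphRepresentation

theorem statement_7 {α : Type u} (N : Matroid α) (e f : α) (hef : e ≠ f)
    (h : SeriesPair N e f) : InBL (con N {e}) ↔ InBL N := by
  rw [inBL_iff, inBL_iff]
  constructor
  · rintro ⟨k, hk, V, i, hi⟩
    exact ⟨k, hk, hi.exists_of_con h hef⟩
  · rintro ⟨k, hk, V, i, hi⟩
    obtain ⟨j, hjk, V', i', hi'⟩ := hi.exists_con (h.indep_singleton hef)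
    exact ⟨j, hjk.trans hk, V', i', hi'⟩

end BLFormal
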